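/- Let n > 4, let L = H(n) over ℂ with ℤ-grading L = ⊕_{j=−1}^{ξ_H} L_j where ξ_H = n−3, and let −1 ≤ k, l ≤ ξ_H with k + l = ξ_H. If x ∈ L_k satisfies [x, L_l] = 0, then x = 0. -/

import Mathlib

open scoped BigOperators

noncomputable section

namespace CartanSuper

/-- Coordinates of the exterior algebra `Λ(n)` with respect to the monomial basis
`{x_S : S ⊆ {1,…,n}}`. -/
abbrev Lambda (n : ℕ) := Finset (Fin n) → ℂ

/-- Endomorphism algebra of `Λ(n)`. -/
abbrev E (n : ℕ) := Module.End ℂ (Lambda n)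

variable (n : ℕ)

/-- `(−1)^k`. -/
def msign (k : ℕ) : ℂ := (-1 : ℂ) ^ k

/-- The basis monomial `x_S = x_{i₁}⋯x_{i_k}` (indices in increasing order). -/
def mono (S : Finset (Fin n)) : Lambda n := fun T => if T = S then 1 else 0

/-- Number of inversions between `S` and `T`. -/
def inversions (S T : Finset (Fin n)) : ℕ := ((S ×ˢ T).filter fun p => p.2 < p.1).card

/-- The multiplication of `Λ(n)` in coordinates:
`x_S · x_T = (−1)^{inversions} x_{S ∪ T}` for disjoint `S, T` and `0` otherwise. -/
def lmulFun (f g : Lambda n) : Lambda n :=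
  fun U => ∑ S ∈ U.powerset, msign (inversions n S (U \ S)) * f S * g (U \ S)

/-- Left multiplication by an element of `Λ(n)`, as a linear map `Λ(n) →ₗ End Λ(n)`. -/
def mulOp : Lambda n →ₗ[ℂ] E n where
  toFun f :=
    { toFun := lmulFun n f
      map_add' := by
        intro g h; funext U
        simp [lmulFun, mul_add, Finset.sum_add_distrib]
      map_smul' := by
        intro c g; funext U
        simp only [lmulFun, Pi.smul_apply, smul_eq_mul, RingHom.id_apply, Finset.mul_sum]
        exact Finset.sum_congr rfl (by intros; ring) }
  map_add' := by
    intro f g; apply LinearMap.ext; intro h; funext U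
    show lmulFun n (f + g) h U = lmulFun n f h U + lmulFun n g h U
    simp only [lmulFun]
    rw [← Finset.sum_add_distrib]
    exact Finset.sum_congr rfl (by intros; simp [Pi.add_apply]; ring)
  map_smul' := by
    intro c f; apply LinearMap.ext; intro h; funext U
    show lmulFun n (c • f) h U = (c • lmulFun n f h) U
    simp only [lmulFun, Pi.smul_apply, smul_eq_mul, Finset.mul_sum]
    exact Finset.sum_congr rfl (by intros; ring)

/-- The superderivation `∂_i` of `Λ(n)`, in coordinates. -/
def pd (i : Fin n) : E n where
  toFun f := fun S =>
    if i ∈ S then 0 else msign (S.filter (· < i)).card * f (insert i S)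
  map_add' := by
    intro f g; funext S; by_cases h : i ∈ S <;> simp [h, mul_add]
  map_smul' := by
    intro c f; funext S; by_cases h : i ∈ S <;> simp [h] <;> ring

/-- The parity operator `σ` of `Λ(n)`: `σ(x_S) = (−1)^{|S|} x_S`. -/
def par : E n where
  toFun f := fun S => msign S.card * f S
  map_add' := by intro f g; funext S; simp [mul_add]
  map_smul' := by intro c f; funext S; simp; ring

/-- The super-commutator `[D,F] = D∘F − (−1)^{|D||F|} F∘D`, extended bilinearly to all of
`End Λ(n)` using the parity operator `σ`
(for homogeneous `D`, `σ∘D∘σ = (−1)^{|D|} D`). -/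
def sbFun (D F : E n) : E n :=
  D * F - (2:ℂ)⁻¹ • ((F + par n * F * par n) * D + (F - par n * F * par n) * (par n * D * par n))

/-- The super-commutator as a bilinear map. -/
def sbL : E n →ₗ[ℂ] E n →ₗ[ℂ] E n :=
  LinearMap.mk₂ ℂ (sbFun n)
    (fun D D' F => by
      simp only [sbFun, add_mul, sub_mul, mul_add, mul_sub, smul_mul_assoc, mul_smul_comm,
        smul_add, smul_sub]
      module)
    (fun c D F => by
      simp only [sbFun, add_mul, sub_mul, mul_add, mul_sub, smul_mul_assoc, mul_smul_comm,
        smul_add, smul_sub]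
      module)
    (fun D F F' => by
      simp only [sbFun, add_mul, sub_mul, mul_add, mul_sub, smul_mul_assoc, mul_smul_comm,
        smul_add, smul_sub]
      module)
    (fun c D F => by
      simp only [sbFun, add_mul, sub_mul, mul_add, mul_sub, smul_mul_assoc, mul_smul_comm,
        smul_add, smul_sub]
      module)

/-- Shorthand for the super-commutator. -/
def sb (D F : E n) : E n := sbL n D F

/-- The ℤ₂-homogeneous component of `Λ(n)` of parity `p`. -/
def lpar (p : ZMod 2) : Submodule ℂ (Lambda n) where
  carrier := {f | ∀ S : Finset (Fin n), (S.card : ZMod 2) ≠ p → f S = 0}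
  add_mem' := by intro f g hf hg S hS; simp [Pi.add_apply, hf S hS, hg S hS]
  zero_mem' := by intro S hS; rfl
  smul_mem' := by intro c f hf S hS; simp [Pi.smul_apply, hf S hS]

/-- The ℤ-homogeneous component of `Λ(n)` of degree `m` (zero unless `0 ≤ m ≤ n`). -/
def ldeg (m : ℤ) : Submodule ℂ (Lambda n) where
  carrier := {f | ∀ S : Finset (Fin n), (S.card : ℤ) ≠ m → f S = 0}
  add_mem' := by intro f g hf hg S hS; simp [Pi.add_apply, hf S hS, hg S hS]
  zero_mem' := by intro S hS; rfl
  smul_mem' := by intro c f hf S hS; simp [Pi.smul_apply, hf S hS]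

/-- Endomorphisms of `Λ(n)` that are ℤ₂-homogeneous of parity `p`. -/
def epar (p : ZMod 2) : Submodule ℂ (E n) where
  carrier := {D | ∀ (q : ZMod 2), ∀ f ∈ lpar n q, D f ∈ lpar n (q + p)}
  add_mem' := by
    intro D F hD hF q f hf
    simpa [LinearMap.add_apply] using (lpar n (q + p)).add_mem (hD q f hf) (hF q f hf)
  zero_mem' := by intro q f hf; simpa using (lpar n (q + p)).zero_mem
  smul_mem' := by
    intro c D hD q f hf
    simpa [LinearMap.smul_apply] using (lpar n (q + p)).smul_mem c (hD q f hf)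

/-- Endomorphisms of `Λ(n)` that are ℤ-homogeneous of degree `d`. -/
def edeg (d : ℤ) : Submodule ℂ (E n) where
  carrier := {D | ∀ (m : ℤ), ∀ f ∈ ldeg n m, D f ∈ ldeg n (m + d)}
  add_mem' := by
    intro D F hD hF m f hf
    simpa [LinearMap.add_apply] using (ldeg n (m + d)).add_mem (hD m f hf) (hF m f hf)
  zero_mem' := by intro m f hf; simpa using (ldeg n (m + d)).zero_mem
  smul_mem' := by
    intro c D hD m f hf
    simpa [LinearMap.smul_apply] using (ldeg n (m + d)).smul_mem c (hD m f hf)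

/-- The linear map `(f₁,…,f_n) ↦ ∑ᵢ fᵢ ∂ᵢ`. -/
def Wmap : (Fin n → Lambda n) →ₗ[ℂ] E n where
  toFun F := ∑ i, mulOp n (F i) * pd n i
  map_add' := by
    intro F G
    simp only [Pi.add_apply, map_add, add_mul, Finset.sum_add_distrib]
  map_smul' := by
    intro c F
    simp only [RingHom.id_apply, Pi.smul_apply, map_smul, smul_mul_assoc, Finset.smul_sum]

/-- The divergence `(f₁,…,f_n) ↦ ∑ᵢ ∂ᵢ(fᵢ)`. -/
def divMap : (Fin n → Lambda n) →ₗ[ℂ] Lambda n where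
  toFun F := ∑ i, pd n i (F i)
  map_add' := by
    intro F G
    simp only [Pi.add_apply, map_add, Finset.sum_add_distrib]
  map_smul' := by
    intro c F
    simp only [RingHom.id_apply, Pi.smul_apply, map_smul, Finset.smul_sum]

/-- The Witt type Lie superalgebra `W(n) = {∑ fᵢ∂ᵢ : fᵢ ∈ Λ(n)}`. -/
def Wn : Submodule ℂ (E n) := LinearMap.range (Wmap n)

/-- Divergence-free coefficient tuples. -/
def divFree : Submodule ℂ (Fin n → Lambda n) := LinearMap.ker (divMap n)

/-- The special type Lie superalgebra `S(n) = {∑ fᵢ∂ᵢ : ∑ ∂ᵢ(fᵢ) = 0}`. -/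
def Sn : Submodule ℂ (E n) := (divFree n).map (Wmap n)

/-- The top monomial `ω = x₁x₂⋯x_n`. -/
def omegaTop : Lambda n := mono n Finset.univ

/-- `1 − x₁x₂⋯x_n`. -/
def oneM : Lambda n := mono n ∅ - omegaTop n

/-- Multiplication of every coefficient by `1 − x₁⋯x_n`. -/
def oneMScale : (Fin n → Lambda n) →ₗ[ℂ] (Fin n → Lambda n) :=
  LinearMap.pi fun i => (mulOp n (oneM n)) ∘ₗ LinearMap.proj i

/-- The Lie superalgebra `S̃(n) = {(1−x₁⋯x_n)∑ fᵢ∂ᵢ : ∑ ∂ᵢ(fᵢ) = 0}` (`n` even). -/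
def Stn : Submodule ℂ (E n) := (divFree n).map (Wmap n ∘ₗ oneMScale n)

/-- The conjugate index `i'`. -/
def cidx (i : Fin n) : Fin n :=
  ⟨if i.val < n / 2 then i.val + n / 2 else if i.val < 2 * (n / 2) then i.val - n / 2 else i.val,
   by have := i.isLt; split_ifs <;> omega⟩

/-- The linear map `f ↦ D_H(f) = (−1)^{|f|} ∑ᵢ ∂ᵢ(f)∂_{i'}` (the sign is implemented by the
parity operator `σ`, so that this is a single linear map agreeing with `D_H` on homogeneous
elements). -/
def DHmap : Lambda n →ₗ[ℂ] E n where
  toFun f := ∑ i, mulOp n (pd n i (par n f)) * pd n (cidx n i)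
  map_add' := by
    intro f g
    simp only [map_add, add_mul, Finset.sum_add_distrib]
  map_smul' := by
    intro c f
    simp only [RingHom.id_apply, map_smul, smul_mul_assoc, Finset.smul_sum]

/-- Evaluation of the top coefficient. -/
def evalTop : Lambda n →ₗ[ℂ] ℂ := LinearMap.proj Finset.univ

/-- The Hamiltonian Lie superalgebra `H(n) = {D_H(f) : f ∈ ⊕_{i=0}^{n−1} Λ(n)_i}`. -/
def Hn : Submodule ℂ (E n) := (LinearMap.ker (evalTop n)).map (DHmap n)

/-- `H̃(n) = {D_H(f) : f ∈ Λ(n)}`. -/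
def HtN : Submodule ℂ (E n) := LinearMap.range (DHmap n)

/-- The degree derivation `𝒞 = ∑ᵢ xᵢ∂ᵢ`. -/
def CC : E n := ∑ i, mulOp n (mono n {i}) * pd n i

/-- The span of the diagonal elements `xᵢ∂ᵢ`. -/
def diagSpan : Submodule ℂ (E n) :=
  Submodule.span ℂ (Set.range fun i : Fin n => mulOp n (mono n {i}) * pd n i)

/-- The four families of Cartan type Lie superalgebras. -/
inductive CT | W | S | St | H
deriving DecidableEq

/-- Validity of the parameter `n` for each family. -/
def CT.valid : CT → ℕ → Prop
  | .W, n => 4 ≤ n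
  | .S, n => 4 ≤ n
  | .St, n => 4 ≤ n ∧ Even n
  | .H, n => 4 < n

/-- The Cartan type Lie superalgebra `L` itself. -/
def CT.algebra : CT → (n : ℕ) → Submodule ℂ (E n)
  | .W, n => Wn n
  | .S, n => Sn n
  | .St, n => Stn n
  | .H, n => Hn n

/-- The extended algebra `L'`: `L' = L` for `W(n)` and `S̃(n)`, `L' = S(n) ⊕ ℂ𝒞` for `S(n)`,
and `L' = H̃(n) ⊕ ℂ𝒞` for `H(n)`. -/
def CT.prime : CT → (n : ℕ) → Submodule ℂ (E n)
  | .W, n => Wn n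
  | .S, n => Sn n ⊔ Submodule.span ℂ {CC n}
  | .St, n => Stn n
  | .H, n => HtN n ⊔ Submodule.span ℂ {CC n}

/-- The top degree `ξ_L` of the ℤ-grading. -/
def CT.xi : CT → (n : ℕ) → ℤ
  | .W, n => (n : ℤ) - 1
  | .S, n => (n : ℤ) - 2
  | .St, n => (n : ℤ) - 2
  | .H, n => (n : ℤ) - 3

/-- The ℤ-grading component `L_j = L ∩ W(n)_j`; for `S̃(n)` the component of degree `−1`
is `span{(1−x₁⋯x_n)∂ᵢ}` instead. -/
def CT.grade (t : CT) (n : ℕ) (j : ℤ) : Submodule ℂ (E n) :=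
  match t with
  | .St =>
      if j = -1 then
        Submodule.span ℂ (Set.range fun i : Fin n => mulOp n (oneM n) * pd n i)
      else Stn n ⊓ edeg n j
  | t => t.algebra n ⊓ edeg n j

/-- The ℤ-grading component `L'_j` of the extended algebra `L'`. -/
def CT.grade' (t : CT) (n : ℕ) (j : ℤ) : Submodule ℂ (E n) :=
  match t with
  | .St => CT.grade .St n j
  | t => t.prime n ⊓ edeg n j

/-- The standard Cartan subalgebra `H_L` of `L`: the part of the diagonal
`span{xᵢ∂ᵢ}` lying in `L`. -/
def CT.cartan (t : CT) (n : ℕ) : Submodule ℂ (E n) := t.algebra n ⊓ diagSpan n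

/-- The weight space of `M ⊆ End Λ(n)` of weight `μ ∈ H_L^*` under the adjoint action
of the standard Cartan subalgebra of `L`. -/
def wtsp (t : CT) (n : ℕ) (M : Submodule ℂ (E n)) (μ : Module.Dual ℂ (t.cartan n)) :
    Submodule ℂ (E n) where
  carrier := {x | x ∈ M ∧ ∀ h : t.cartan n, sbL n h x = μ h • x}
  add_mem' := by
    rintro x y ⟨hx, hx'⟩ ⟨hy, hy'⟩
    exact ⟨M.add_mem hx hy, fun h => by simp [map_add, hx' h, hy' h, smul_add]⟩
  zero_mem' := ⟨M.zero_mem, fun h => by simp⟩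
  smul_mem' := by
    rintro c x ⟨hx, hx'⟩
    exact ⟨M.smul_mem c hx, fun h => by simp [map_smul, hx' h, smul_comm c]⟩

/-- The set of roots of `M` with respect to the standard Cartan subalgebra of `L`:
the nonzero weights with nonzero weight space. -/
def CT.roots (t : CT) (n : ℕ) (M : Submodule ℂ (E n)) : Set (Module.Dual ℂ (t.cartan n)) :=
  {ε | ε ≠ 0 ∧ wtsp t n M ε ≠ ⊥}

/-- The sign `(−1)^p` for `p ∈ ℤ₂`. -/
def sgn (p : ZMod 2) : ℂ := (-1 : ℂ) ^ p.val

/-- `f` is a super-biderivation of `L` of ℤ₂-degree `pf`: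
a bilinear map with `f(L_α, L_β) ⊆ L_{α+β+pf}` satisfying
`f([x,y],z) = (−1)^{|x||f|}[x,f(y,z)] + (−1)^{|y||z|}[f(x,z),y]` and
`f(x,[y,z]) = [f(x,y),z] + (−1)^{(|f|+|x|)|y|}[y,f(x,z)]` for homogeneous `x,y,z ∈ L`.
(The bilinear map is given as a bilinear map on the ambient space `End Λ(n)`;
only its restriction to `L` is relevant.) -/
structure IsSuperBider (L : Submodule ℂ (E n)) (pf : ZMod 2)
    (f : E n →ₗ[ℂ] E n →ₗ[ℂ] E n) : Prop where
  maps : ∀ (α β : ZMod 2), ∀ x ∈ L ⊓ epar n α, ∀ y ∈ L ⊓ epar n β,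
    f x y ∈ L ⊓ epar n (α + β + pf)
  eq1 : ∀ (α β γ : ZMod 2), ∀ x ∈ L ⊓ epar n α, ∀ y ∈ L ⊓ epar n β, ∀ z ∈ L ⊓ epar n γ,
    f (sbL n x y) z = sgn (α * pf) • sbL n x (f y z) + sgn (β * γ) • sbL n (f x z) y
  eq2 : ∀ (α β γ : ZMod 2), ∀ x ∈ L ⊓ epar n α, ∀ y ∈ L ⊓ epar n β, ∀ z ∈ L ⊓ epar n γ,
    f x (sbL n y z) = sbL n (f x y) z + sgn ((pf + α) * β) • sbL n y (f x z)

/-- `D` is a superderivation of `L` of ℤ₂-degree `p`: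
`D(L_α) ⊆ L_{α+p}` and `D([x,y]) = [D(x),y] + (−1)^{|D||x|}[x,D(y)]` for homogeneous
`x, y ∈ L`. (Given as a linear map on the ambient space `End Λ(n)`.) -/
structure IsSuperDer (L : Submodule ℂ (E n)) (p : ZMod 2)
    (D : E n →ₗ[ℂ] E n) : Prop where
  maps : ∀ (α : ZMod 2), ∀ x ∈ L ⊓ epar n α, D x ∈ L ⊓ epar n (α + p)
  leib : ∀ (α β : ZMod 2), ∀ x ∈ L ⊓ epar n α, ∀ y ∈ L ⊓ epar n β,
    D (sbL n x y) = sbL n (D x) y + sgn (p * α) • sbL n x (D y)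

/-- `f ∈ BDer(L)_ε`: the super-biderivation `f` has weight `ε ∈ H_L^*`, i.e.
`f(L_η, L_ζ) ⊆ L_{ε+η+ζ}` for all weights `η, ζ`. -/
def CT.HasWeight (t : CT) (n : ℕ) (f : E n →ₗ[ℂ] E n →ₗ[ℂ] E n)
    (ε : Module.Dual ℂ (t.cartan n)) : Prop :=
  ∀ (η ζ : Module.Dual ℂ (t.cartan n)),
    ∀ x ∈ wtsp t n (t.algebra n) η, ∀ y ∈ wtsp t n (t.algebra n) ζ,
      f x y ∈ wtsp t n (t.algebra n) (ε + η + ζ)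

/-- `f ∈ BDer(L)_i`: the super-biderivation `f` has ℤ-degree `i`, i.e.
`f(L_j, L_k) ⊆ L_{i+j+k}` for all `j, k ∈ ℤ`. -/
def CT.HasDeg (t : CT) (n : ℕ) (f : E n →ₗ[ℂ] E n →ₗ[ℂ] E n) (i : ℤ) : Prop :=
  ∀ (j k : ℤ), ∀ x ∈ t.grade n j, ∀ y ∈ t.grade n k, f x y ∈ t.grade n (i + j + k)

section Helpers

open Finset in
lemma msign_add (a b : ℕ) : msign (a + b) = msign a * msign b := pow_add _ _ _

lemma msign_sq (a : ℕ) : msign a * msign a = 1 := by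
  rw [← msign_add, msign, ← two_mul, pow_mul]; simp

lemma msign_one : msign 1 = -1 := by simp [msign]

lemma msign_ne (a : ℕ) : msign a ≠ 0 := by simp [msign]

lemma msign_congr {a b : ℕ} (h : a % 2 = b % 2) : msign a = msign b := by
  unfold msign
  rw [neg_one_pow_eq_pow_mod_two, h, ← neg_one_pow_eq_pow_mod_two]

lemma msign_cases (a : ℕ) : msign a = 1 ∨ msign a = -1 := neg_one_pow_eq_or ℂ a

variable {n}

/-- elements of `S` below `i` -/
def lowc (i : Fin n) (S : Finset (Fin n)) : ℕ := (S.filter (· < i)).card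
/-- elements of `S` above `i` -/
def upc (i : Fin n) (S : Finset (Fin n)) : ℕ := (S.filter (i < ·)).card

lemma low_up (i : Fin n) (S : Finset (Fin n)) (h : i ∉ S) : lowc i S + upc i S = S.card := by
  unfold lowc upc
  rw [← Finset.card_union_of_disjoint]
  · congr 1; ext a; simp only [Finset.mem_union, Finset.mem_filter]
    constructor
    · tauto
    · intro ha
      have : a ≠ i := by rintro rfl; exact h ha
      rcases lt_or_gt_of_ne this with h | h <;> simp [ha, h]
  · rw [Finset.disjoint_left]; intro a; simp only [Finset.mem_filter]
    rintro ⟨_, h1⟩ ⟨_, h2⟩; exact absurd h1 (not_lt.mpr h2.le)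

lemma low_union (i : Fin n) (S T : Finset (Fin n)) (h : Disjoint S T) :
    lowc i (S ∪ T) = lowc i S + lowc i T := by
  unfold lowc
  rw [Finset.filter_union, Finset.card_union_of_disjoint]
  exact Finset.disjoint_filter_filter h

lemma low_insert (i j : Fin n) (S : Finset (Fin n)) (h : j ∉ S) :
    lowc i (insert j S) = lowc i S + if j < i then 1 else 0 := by
  unfold lowc
  rw [Finset.filter_insert]
  split_ifs
  · rw [Finset.card_insert_of_notMem]; simp [h]
  · simp

lemma inv_eq (S T : Finset (Fin n)) : inversions n S T = ∑ s ∈ S, lowc s T := by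
  unfold inversions lowc
  rw [Finset.card_filter, Finset.sum_product]
  simp only [Finset.card_filter]

lemma inv_eq' (S T : Finset (Fin n)) : inversions n S T = ∑ t ∈ T, upc t S := by
  unfold inversions upc
  rw [Finset.card_filter, Finset.sum_product_right]
  simp only [Finset.card_filter]

lemma inv_insert_left (i : Fin n) (S T : Finset (Fin n)) (h : i ∉ S) :
    inversions n (insert i S) T = lowc i T + inversions n S T := by
  rw [inv_eq, inv_eq, Finset.sum_insert h]

lemma inv_insert_right (i : Fin n) (S T : Finset (Fin n)) (h : i ∉ T) :
    inversions n S (insert i T) = upc i S + inversions n S T := by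
  rw [inv_eq', inv_eq', Finset.sum_insert h]

lemma inv_comm (S T : Finset (Fin n)) (h : Disjoint S T) :
    inversions n S T + inversions n T S = S.card * T.card := by
  rw [inv_eq, inv_eq', ← Finset.sum_add_distrib, Finset.sum_congr rfl (g := fun _ => T.card)]
  · simp
  · intro s hs; exact low_up _ _ (Finset.disjoint_left.mp h hs)

lemma lmul_apply (f g : Lambda n) (U : Finset (Fin n)) : mulOp n f g U =
    ∑ S ∈ U.powerset, msign (inversions n S (U \ S)) * f S * g (U \ S) := rfl

lemma pd_apply (i : Fin n) (f : Lambda n) (S : Finset (Fin n)) : pd n i f S =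
    if i ∈ S then 0 else msign (lowc i S) * f (insert i S) := rfl

lemma par_apply (f : Lambda n) (S : Finset (Fin n)) : par n f S = msign S.card * f S := rfl

lemma leibniz (i : Fin n) (f g : Lambda n) : pd n i (mulOp n f g) =
    mulOp n (pd n i f) g + mulOp n (par n f) (pd n i g) := by
  funext U
  rw [Pi.add_apply]
  by_cases hi : i ∈ U
  · obtain ⟨V, hV, rfl⟩ : ∃ V, i ∉ V ∧ insert i V = U :=
      ⟨U.erase i, by simp, Finset.insert_erase hi⟩
    rw [pd_apply, if_pos hi, lmul_apply, lmul_apply, Finset.sum_powerset_insert hV,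
      Finset.sum_powerset_insert hV, ← Finset.sum_add_distrib, ← Finset.sum_add_distrib,
      ← Finset.sum_add_distrib]
    symm; apply Finset.sum_eq_zero
    intro S hS
    rw [Finset.mem_powerset] at hS
    have hiS : i ∉ S := fun h => hV (hS h)
    have e1 : insert i V \ S = insert i (V \ S) := Finset.insert_sdiff_of_notMem _ hiS
    have e2 : insert i V \ insert i S = V \ S := by
      ext a; by_cases ha : a = i
      · subst ha; simp [hV]
      · simp [ha]
    have hiT : i ∉ V \ S := by simp [hV]
    rw [e1, e2]
    simp only [pd_apply, par_apply, hiS, hiT, Finset.mem_insert_self, if_true, if_false,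
      inv_insert_left i S _ hiS, inv_insert_right i S _ hiT, Finset.card_insert_of_notMem hiS,
      ← low_up i S hiS, msign_add, msign_one]
    linear_combination (msign (upc i S) * msign (inversions n S (V \ S)) * msign (lowc i S) *
      f (insert i S) * g (insert i (V \ S))) * (1 - msign_sq (lowc i (V \ S)))
  · have hV := hi
    rw [pd_apply, if_neg hi, lmul_apply, lmul_apply, lmul_apply, Finset.sum_powerset_insert hV,
      ← Finset.sum_add_distrib, ← Finset.sum_add_distrib, Finset.mul_sum]
    apply Finset.sum_congr rfl
    intro S hS
    rw [Finset.mem_powerset] at hS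
    have hiS : i ∉ S := fun h => hV (hS h)
    have e1 : insert i U \ S = insert i (U \ S) := Finset.insert_sdiff_of_notMem _ hiS
    have e2 : insert i U \ insert i S = U \ S := by
      ext a; by_cases ha : a = i
      · subst ha; simp [hV]
      · simp [ha]
    have hiT : i ∉ U \ S := by simp [hV]
    have e3 : lowc i U = lowc i S + lowc i (U \ S) := by
      rw [← low_union _ _ _ Finset.disjoint_sdiff, Finset.union_sdiff_of_subset hS]
    rw [e1, e2, e3]
    simp only [pd_apply, par_apply, hiS, hiT, if_false,
      inv_insert_left i S _ hiS, inv_insert_right i S _ hiT, 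
      ← low_up i S hiS, msign_add]
    linear_combination (msign (lowc i S) * msign (inversions n S (U \ S)) *
      f (insert i S) * g (U \ S)) * (msign_sq (lowc i (U \ S)))

lemma pd_anti (i j : Fin n) (f : Lambda n) : pd n i (pd n j f) = - pd n j (pd n i f) := by
  funext S
  simp only [Pi.neg_apply, pd_apply, Finset.mem_insert]
  by_cases hi : i ∈ S
  · simp [hi]
  by_cases hj : j ∈ S
  · simp [hj]
  by_cases hij : i = j
  · subst hij; simp
  have hji : j ≠ i := fun h => hij h.symm
  simp only [hi, hj, hij, hji, or_self, if_false, low_insert _ _ _ hi, low_insert _ _ _ hj,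
    Finset.insert_comm j i]
  rcases lt_or_gt_of_ne hij with h | h
  · simp only [h, not_lt.mpr h.le, if_true, if_false, msign_add, msign_one, add_zero]; ring
  · simp only [h, not_lt.mpr (le_of_lt h), if_true, if_false, msign_add, msign_one, add_zero]; ring

lemma scomm (f g : Lambda n) (c : ℂ)
    (h : ∀ S T : Finset (Fin n), f S ≠ 0 → g T ≠ 0 → msign (S.card * T.card) = c) :
    mulOp n f g = c • mulOp n g f := by
  funext U
  rw [Pi.smul_apply, lmul_apply, lmul_apply, smul_eq_mul, Finset.mul_sum]
  apply Finset.sum_bij' (fun S _ => U \ S) (fun S _ => U \ S)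
  · intro S hS; simp
  · intro S hS; simp
  · intro S hS; exact Finset.sdiff_sdiff_eq_self (Finset.mem_powerset.mp hS)
  · intro S hS; exact Finset.sdiff_sdiff_eq_self (Finset.mem_powerset.mp hS)
  · intro S hS
    rw [Finset.sdiff_sdiff_eq_self (Finset.mem_powerset.mp hS)]
    by_cases h1 : f S = 0
    · simp [h1]
    by_cases h2 : g (U \ S) = 0
    · simp [h2]
    rw [← h _ _ h1 h2, ← inv_comm S (U \ S) Finset.disjoint_sdiff, msign_add]
    linear_combination -(msign (inversions n S (U \ S)) * f S * g (U \ S)) *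
      msign_sq (inversions n (U \ S) S)

lemma pd_deg {m : ℤ} (i : Fin n) {f : Lambda n} (hf : f ∈ ldeg n m) :
    pd n i f ∈ ldeg n (m - 1) := by
  intro S hS
  rw [pd_apply]
  split_ifs with h
  · rfl
  · rw [hf (insert i S), mul_zero]
    rw [Finset.card_insert_of_notMem h]; push_cast; omega

lemma mul_deg {a b : ℤ} {f g : Lambda n} (hf : f ∈ ldeg n a) (hg : g ∈ ldeg n b) :
    mulOp n f g ∈ ldeg n (a + b) := by
  intro U hU
  rw [lmul_apply]
  apply Finset.sum_eq_zero
  intro S hS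
  have := Finset.card_sdiff_add_card_eq_card (Finset.mem_powerset.mp hS)
  by_cases h : (S.card : ℤ) = a
  · rw [hg (U \ S), mul_zero]; omega
  · rw [hf S h]; ring

lemma par_deg {m : ℕ} {f : Lambda n} (hf : f ∈ ldeg n m) : par n f = msign m • f := by
  funext S
  rw [par_apply, Pi.smul_apply, smul_eq_mul]
  by_cases h : (S.card : ℤ) = m
  · rw [show S.card = m by omega]
  · rw [hf S h]; ring

lemma mul_one' (f : Lambda n) : mulOp n f (mono n ∅) = f := by
  funext U
  rw [lmul_apply, Finset.sum_eq_single U]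
  · simp [mono, inv_eq, lowc, msign]
  · intro S hS hne
    have : U \ S ≠ ∅ := by
      rw [Ne, Finset.sdiff_eq_empty_iff_subset]
      exact fun h => hne (Finset.Subset.antisymm (Finset.mem_powerset.mp hS) h)
    simp [mono, this]
  · simp

lemma pd_gen (i m : Fin n) : pd n i (mono n {m}) = if i = m then mono n ∅ else 0 := by
  funext S
  rw [pd_apply]
  by_cases hS : S = ∅
  · subst hS
    by_cases h : i = m
    · subst h; simp [mono, lowc, msign]
    · simp [mono, h]
  · have : (if i = m then mono n ∅ else 0 : Lambda n) S = 0 := by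
      split_ifs <;> simp [mono, hS]
    rw [this]
    split_ifs with h
    · rfl
    · have : insert i S ≠ {m} := by
        intro h'
        have hc := congrArg Finset.card h'
        rw [Finset.card_insert_of_notMem h] at hc
        simp at hc; exact hS hc
      simp [mono, this]

lemma cidx_cidx (i : Fin n) : cidx n (cidx n i) = i := by
  apply Fin.ext
  have := i.isLt
  simp only [cidx]
  split_ifs <;> omega

lemma mono_deg (S : Finset (Fin n)) : mono n S ∈ ldeg n S.card := by
  intro T hT
  have : T ≠ S := by rintro rfl; exact hT rfl
  simp [mono, this]

lemma DH_apply (f g : Lambda n) :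
    DHmap n f g = ∑ i, mulOp n (pd n i (par n f)) (pd n (cidx n i) g) := by
  simp [DHmap, LinearMap.sum_apply]

lemma DH_gen (f : Lambda n) (m : Fin n) : DHmap n f (mono n {m}) = pd n (cidx n m) (par n f) := by
  rw [DH_apply, Finset.sum_eq_single (cidx n m)]
  · rw [cidx_cidx, pd_gen, if_pos rfl, mul_one']
  · intro i _ hi
    rw [pd_gen, if_neg, map_zero]
    rintro rfl; exact hi (cidx_cidx i).symm
  · simp

lemma DH_deg {p : ℤ} {f : Lambda n} (hf : f ∈ ldeg n p) : DHmap n f ∈ edeg n (p - 2) := by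
  intro m g hg
  rw [DH_apply]
  apply Submodule.sum_mem
  intro i _
  have hf' : par n f ∈ ldeg n p := by
    intro S hS; rw [par_apply, hf S hS, mul_zero]
  have := mul_deg (pd_deg i hf') (pd_deg (cidx n i) hg)
  rwa [show p - 1 + (m - 1) = m + (p - 2) by ring] at this

lemma DH_hom {p : ℕ} {f : Lambda n} (hf : f ∈ ldeg n p) (g : Lambda n) :
    DHmap n f g = msign p • ∑ i, mulOp n (pd n i f) (pd n (cidx n i) g) := by
  rw [DH_apply, par_deg hf]
  simp [Finset.smul_sum]

/-- The Poisson-type bracket. -/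
def pb (f g : Lambda n) : Lambda n := ∑ i, mulOp n (pd n i f) (pd n (cidx n i) g)

lemma sb_gen {a b : ℕ} (hab : n = a + b + 1) (hn : 4 < n) {x y : E n}
    (hx : x ∈ edeg n ((a : ℤ) - 1)) (hy : y ∈ edeg n ((b : ℤ) - 1)) (m : Fin n) :
    sbL n x y (mono n {m}) =
      x (y (mono n {m})) - msign ((a + 1) * (b + 1)) • y (x (mono n {m})) := by
  have hm : mono n {m} ∈ ldeg n ((1 : ℕ) : ℤ) := by
    have := mono_deg ({m} : Finset (Fin n)); simpa using this
  have hxm : x (mono n {m}) ∈ ldeg n (a : ℤ) := by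
    have := hx _ _ hm
    rwa [show ((1 : ℕ) : ℤ) + ((a : ℤ) - 1) = a by push_cast; ring] at this
  have hyx : y (x (mono n {m})) ∈ ldeg n ((a + b - 1 : ℕ) : ℤ) := by
    have := hy _ _ hxm
    rwa [show (a : ℤ) + ((b : ℤ) - 1) = ((a + b - 1 : ℕ) : ℤ) by omega] at this
  have e : sbL n x y = sbFun n x y := rfl
  rw [e]
  simp only [sbFun, LinearMap.sub_apply, LinearMap.add_apply, LinearMap.smul_apply,
    Module.End.mul_apply, par_deg hm, map_smul, par_deg hxm, par_deg hyx]
  have hs : msign (a + b - 1) = - (msign a * msign b) := by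
    rw [← msign_add, neg_eq_neg_one_mul, ← msign_one, ← msign_add]
    exact msign_congr (by omega)
  have h4 : msign ((a + 1) * (b + 1)) = msign (a * b) * msign a * msign b * msign 1 := by
    simp only [← msign_add]; congr 1; ring
  have h5 : msign (a * b) = msign a ^ b := by simp [msign, pow_mul]
  have h6 : (msign b = 1 → msign a ^ b = 1) ∧ (msign b = -1 → msign a ^ b = msign a) := by
    rcases Nat.even_or_odd b with hb | hb
    · have hb1 : msign b = 1 := hb.neg_one_pow
      have : msign a ^ b = 1 := by
        rcases msign_cases a with h | h <;> rw [h]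
        · simp
        · exact hb.neg_one_pow
      refine ⟨fun _ => this, fun h => ?_⟩
      rw [hb1] at h; norm_num at h
    · have hb1 : msign b = -1 := hb.neg_one_pow
      have : msign a ^ b = msign a := by
        rcases msign_cases a with h | h <;> rw [h]
        · simp
        · exact hb.neg_one_pow
      refine ⟨fun h => ?_, fun _ => this⟩
      rw [hb1] at h; norm_num at h
  rw [h4, h5, hs, msign_one]
  rcases msign_cases a with ha | ha <;> rcases msign_cases b with hb | hb
  · rw [h6.1 hb, ha, hb]; module
  · rw [h6.2 hb, ha, hb]; module
  · rw [h6.1 hb, ha, hb]; module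
  · rw [h6.2 hb, ha, hb]; module

/-- The conjugation as an equivalence. -/
def cequiv : Fin n ≃ Fin n := ⟨cidx n, cidx n, cidx_cidx, cidx_cidx⟩

lemma pb_pd_swap {a b : ℕ} {f g : Lambda n} (hf : f ∈ ldeg n ((a + 1 : ℕ) : ℤ))
    (hg : g ∈ ldeg n ((b + 1 : ℕ) : ℤ)) (j : Fin n) :
    pb g (pd n j f) = msign ((a + 1) * b) • 
      ∑ i, mulOp n (pd n i (pd n j f)) (pd n (cidx n i) g) := by
  rw [pb, ← Equiv.sum_comp cequiv, Finset.smul_sum]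
  apply Finset.sum_congr rfl
  intro i _
  rw [show cequiv i = cidx n i from rfl, cidx_cidx]
  apply scomm
  intro S T hS hT
  have h1 : (S.card : ℤ) = ((b + 1 : ℕ) : ℤ) - 1 := by
    by_contra h; exact hS (pd_deg _ hg S h)
  have h2 : (T.card : ℤ) = ((a + 1 : ℕ) : ℤ) - 1 - 1 := by
    by_contra h; exact hT (pd_deg _ (pd_deg _ hf) T h)
  have h3 : S.card = b := by omega
  have h4 : a = T.card + 1 := by omega
  rw [h3, h4]
  apply msign_congr
  rw [show (T.card + 1 + 1) * b = b * T.card + 2 * b by ring]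
  omega

lemma pd_pb {a : ℕ} {f : Lambda n} (hf : f ∈ ldeg n ((a + 1 : ℕ) : ℤ)) (g : Lambda n) (j : Fin n) :
    pd n j (pb f g) = - ∑ i, mulOp n (pd n i (pd n j f)) (pd n (cidx n i) g)
      - msign a • pb f (pd n j g) := by
  rw [pb, pb, map_sum, Finset.smul_sum, ← Finset.sum_neg_distrib, ← Finset.sum_sub_distrib]
  apply Finset.sum_congr rfl
  intro i _
  have h : pd n i f ∈ ldeg n (a : ℤ) := by
    have := pd_deg i hf
    rwa [show ((a + 1 : ℕ) : ℤ) - 1 = a by push_cast; ring] at this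
  rw [leibniz, par_deg h, pd_anti j i, pd_anti j (cidx n i)]
  simp only [map_neg, map_smul, LinearMap.neg_apply, LinearMap.smul_apply]
  module

lemma pd_pb_zero {a b : ℕ} (hab : n = a + b + 1) (hn : 4 < n) {f g : Lambda n}
    (hf : f ∈ ldeg n ((a + 1 : ℕ) : ℤ)) (hg : g ∈ ldeg n ((b + 1 : ℕ) : ℤ))
    (h0 : sbL n (DHmap n f) (DHmap n g) = 0) (j : Fin n) : pd n j (pb f g) = 0 := by
  have hx := DH_deg hf
  have hy := DH_deg hg
  rw [show ((a + 1 : ℕ) : ℤ) - 2 = (a : ℤ) - 1 by push_cast; ring] at hx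
  rw [show ((b + 1 : ℕ) : ℤ) - 2 = (b : ℤ) - 1 by push_cast; ring] at hy
  have key := sb_gen hab hn hx hy (cidx n j)
  rw [h0, LinearMap.zero_apply, DH_gen, DH_gen, cidx_cidx, par_deg hf, par_deg hg] at key
  simp only [map_smul] at key
  rw [DH_hom hf, DH_hom hg] at key
  change 0 = msign (b + 1) • msign (a + 1) • pb f (pd n j g) -
    msign ((a + 1) * (b + 1)) • msign (a + 1) • msign (b + 1) • pb g (pd n j f) at key
  rw [pb_pd_swap hf hg] at key
  rw [pd_pb hf]
  set A := pb f (pd n j g)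
  set B := ∑ i, mulOp n (pd n i (pd n j f)) (pd n (cidx n i) g)
  have e1 : msign ((a + 1) * (b + 1)) = msign ((a + 1) * b) * msign (a + 1) := by
    rw [← msign_add]; congr 1
  have e2 := msign_sq ((a + 1) * b)
  have e3 := msign_sq (a + 1)
  have e4 := msign_sq (b + 1)
  have e5 : msign (a + 1) = - msign a := by rw [msign_add, msign_one]; ring
  have e6 : (msign (b + 1) * msign (a + 1)) • A - msign (b + 1) • B = 0 := by
    rw [e1] at key
    simp only [smul_smul] at key
    rw [key]
    congr 2
    linear_combination -msign (b+1) * e2 * 1 - msign (b+1) * msign ((a+1)*b) ^ 2 * (e3)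
  have e7 : msign (b + 1) • (msign (b + 1) • (msign (a + 1) • A - B)) = 0 := by
    rw [smul_sub, smul_smul, e6, smul_zero]
  rw [smul_smul, e4, one_smul, e5] at e7
  rw [← e7]; module

lemma pb_div {a : ℕ} {f : Lambda n} (hf : f ∈ ldeg n ((a + 1 : ℕ) : ℤ)) (g : Lambda n) :
    msign a • pb f g = ∑ i, pd n (cidx n i) (mulOp n (pd n i f) g) := by
  have hz : ∑ i, mulOp n (pd n (cidx n i) (pd n i f)) g = 0 := by
    have h : ∑ i, mulOp n (pd n (cidx n i) (pd n i f)) g =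
        - ∑ i, mulOp n (pd n (cidx n i) (pd n i f)) g := by
      conv_lhs => rw [← Equiv.sum_comp cequiv]
      rw [← Finset.sum_neg_distrib]
      apply Finset.sum_congr rfl
      intro i _
      rw [show cequiv i = cidx n i from rfl, cidx_cidx, pd_anti, map_neg, LinearMap.neg_apply]
    exact self_eq_neg.mp h
  rw [← zero_add (msign a • pb f g), ← hz, pb, Finset.smul_sum, ← Finset.sum_add_distrib]
  apply Finset.sum_congr rfl
  intro i _
  have h : pd n i f ∈ ldeg n (a : ℤ) := by
    have := pd_deg i hf
    rwa [show ((a + 1 : ℕ) : ℤ) - 1 = a by push_cast; ring] at this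
  rw [leibniz, par_deg h, map_smul, LinearMap.smul_apply]

lemma top_zero {a b : ℕ} (hab : n = a + b + 1) (hn : 4 < n) {f g : Lambda n}
    (hf : f ∈ ldeg n ((a + 1 : ℕ) : ℤ)) (hg : g ∈ ldeg n ((b + 1 : ℕ) : ℤ))
    (h0 : sbL n (DHmap n f) (DHmap n g) = 0) (i : Fin n) :
    mulOp n (pd n i f) g Finset.univ = 0 := by
  obtain ⟨j, hj⟩ : ∃ j : Fin n, j ≠ cidx n i := by
    have : Nontrivial (Fin n) := Fin.nontrivial_iff_two_le.mpr (by omega)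
    exact exists_ne _
  set U : Finset (Fin n) := Finset.univ.erase (cidx n i) with hU
  have hpb : pb f g U = 0 := by
    have h := congrFun (pd_pb_zero hab hn hf hg h0 j) (U.erase j)
    rw [pd_apply, if_neg (by simp), Finset.insert_erase (by simp [hU, hj])] at h
    simpa [msign_ne] using h
  have h := congrFun (pb_div hf g) U
  rw [Pi.smul_apply, hpb, smul_zero, Finset.sum_apply, Finset.sum_eq_single i] at h
  · rw [pd_apply, if_neg (by simp [hU]), hU, Finset.insert_erase (by simp)] at h
    simpa [msign_ne] using h.symm
  · intro k _ hk
    rw [pd_apply, if_pos]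
    simp only [hU, Finset.mem_erase, Finset.mem_univ, and_true]
    intro h'
    apply hk
    rw [← cidx_cidx k, h', cidx_cidx]
  · simp

lemma mul_mono_top (h : Lambda n) (T : Finset (Fin n)) (hz : mulOp n h (mono n T) Finset.univ = 0) :
    h Tᶜ = 0 := by
  rw [lmul_apply, Finset.sum_eq_single Tᶜ] at hz
  · simpa [mono, msign_ne, ← Finset.compl_eq_univ_sdiff] using hz
  · intro S _ hS
    have : Finset.univ \ S ≠ T := by
      rw [← Finset.compl_eq_univ_sdiff]; rintro rfl; simp at hS
    simp [mono, this]
  · simp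

lemma DH_congr (f g : Lambda n) (h : ∀ S, S.Nonempty → f S = g S) : DHmap n f = DHmap n g := by
  apply LinearMap.ext; intro u
  rw [DH_apply, DH_apply]
  apply Finset.sum_congr rfl
  intro i _
  congr 2
  funext S
  rw [pd_apply, pd_apply, par_apply, par_apply, h _ (Finset.insert_nonempty _ _)]

lemma main_aux0 {a b : ℕ} (hab : n = a + b + 1) (hn : 4 < n) (f : Lambda n) (hb : b + 1 < n)
    (hfe : f ∅ = 0) (hxd : DHmap n f ∈ edeg n ((a : ℤ) - 1))
    (hz : ∀ y ∈ Hn n ⊓ edeg n ((b : ℤ) - 1), sbL n (DHmap n f) y = 0) : f = 0 := by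
  have hf : f ∈ ldeg n ((a + 1 : ℕ) : ℤ) := by
    intro S hS
    rcases S.eq_empty_or_nonempty with rfl | ⟨i, hi⟩
    · exact hfe
    · have hm := mono_deg ({cidx n i} : Finset (Fin n))
      have h1 := hxd _ _ hm (S.erase i) (by
        have := Finset.card_erase_add_one hi
        simp only [Finset.card_singleton]; push_cast at *; omega)
      rw [DH_gen, cidx_cidx, pd_apply, if_neg (by simp), Finset.insert_erase hi, par_apply] at h1
      simpa [msign_ne] using h1
  have hf0 : f = 0 := by
    funext S
    rcases S.eq_empty_or_nonempty with rfl | ⟨i, hi⟩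
    · exact hfe
    by_cases hS : (S.card : ℤ) = ((a + 1 : ℕ) : ℤ)
    · have hc : (S.erase i)ᶜ.card = b + 1 := by
        rw [Finset.card_compl, Fintype.card_fin]
        have := Finset.card_erase_add_one hi
        omega
      have hg : mono n (S.erase i)ᶜ ∈ ldeg n ((b + 1 : ℕ) : ℤ) := by
        have := mono_deg (S.erase i)ᶜ
        rwa [hc] at this
      have hy : DHmap n (mono n (S.erase i)ᶜ) ∈ Hn n ⊓ edeg n ((b : ℤ) - 1) := by
        refine ⟨⟨_, ?_, rfl⟩, ?_⟩
        · change mono n (S.erase i)ᶜ Finset.univ = 0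
          apply hg
          rw [Finset.card_univ, Fintype.card_fin]; omega
        · have := DH_deg hg
          rwa [show ((b + 1 : ℕ) : ℤ) - 2 = (b : ℤ) - 1 by push_cast; ring] at this
      have h1 := mul_mono_top _ _ (top_zero hab hn hf hg (hz _ hy) i)
      rw [compl_compl, pd_apply, if_neg (by simp), Finset.insert_erase hi] at h1
      simpa [msign_ne] using h1
    · exact hf S hS
  exact hf0

lemma main_aux {a b : ℕ} (hab : n = a + b + 1) (hn : 4 < n) (x : E n) (hb : b + 1 < n)
    (hx : x ∈ Hn n) (hxd : x ∈ edeg n ((a : ℤ) - 1))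
    (hz : ∀ y ∈ Hn n ⊓ edeg n ((b : ℤ) - 1), sbL n x y = 0) : x = 0 := by
  obtain ⟨f₀, -, hfx⟩ := hx
  have hff : DHmap n f₀ = DHmap n (fun S => if S.Nonempty then f₀ S else 0) :=
    DH_congr _ _ (by intro S hS; simp [hS])
  rw [hff] at hfx
  subst hfx
  rw [main_aux0 hab hn _ hb (by simp) hxd hz, map_zero]

end Helpers

/-- Let `n > 4`, `L = H(n)` with `ξ_H = n − 3`, and `−1 ≤ k, l ≤ ξ_H` with
`k + l = ξ_H`. If `x ∈ L_k` satisfies `[x, L_l] = 0`, then `x = 0`. -/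
theorem Hn_top_pairing_nondegenerate (n : ℕ) (hn : 4 < n) (k l : ℤ)
    (hk : -1 ≤ k) (hk' : k ≤ (n : ℤ) - 3) (hl : -1 ≤ l) (hl' : l ≤ (n : ℤ) - 3)
    (hkl : k + l = (n : ℤ) - 3)
    (x : E n) (hx : x ∈ CT.H.grade n k)
    (hzero : ∀ y ∈ CT.H.grade n l, sbL n x y = 0) :
    x = 0 := by
  obtain ⟨a, ha⟩ := Int.eq_ofNat_of_zero_le (show 0 ≤ k + 1 by omega)
  obtain ⟨b, hb⟩ := Int.eq_ofNat_of_zero_le (show 0 ≤ l + 1 by omega)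
  obtain rfl : k = (a : ℤ) - 1 := by omega
  obtain rfl : l = (b : ℤ) - 1 := by omega
  exact main_aux (a := a) (b := b) (by omega) hn x (by omega) hx.1 hx.2 hzero

end CartanSuper
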